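/- Let 0 < γ < 2 and α ∈ ℝ, and let f : ℤ≥0 × ℤ≥0 → ℂ satisfy the cross-ratio equation (q) and the constraint (c) with parameter γ at every (n,m) (all denominators occurring being nonzero), with initial data f_{0,0} = 0, f_{1,0} = 1, f_{0,1} = e^{iα}, and assume f is an immersion (interiors of convex hulls of adjacent elementary quadrilaterals are disjoint). Then: (a) for every (n,m) with n + m odd and n ≥ 1, m ≥ 1, setting r1 = |f_{n+1,m} − f_{n,m}|, r2 = |f_{n,m+1} − f_{n,m}|, r3 = |f_{n−1,m} − f_{n,m}|, r4 = |f_{n,m−1} − f_{n,m}|, one has r1·r2·(n+m+1−γ) + r2·r3·(−n+m+1−γ) + r3·r4·(−n−m+1−γ) + r4·r1·(n−m+1−γ) = 0; (b) the radius function R defined by R(N+iM) = |f_{n+1,m} − f_{n,m}| with n = N+M, m = M−N satisfies equation (Ri) at every z = N + iM ∈ V_int. -/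

import Mathlib

/-!
Call `f (n, m)` a center when `n + m` is even and a crossing point otherwise. A quadrilateral of
cross-ratio `-1` with two equal adjacent sides at a vertex is a kite with right angles at the two
neighboring vertices, and conversely. The constraint on the axes forces each axis to be straight at
crossing points and to have equal consecutive edges at centers; going from quadrilateral to
quadrilateral, all edges at a center have the same length (the radius) and all edges at a crossing
point lie on two orthogonal lines. The immersion property says that they point in four different
directions.

Let `e` be the edge from a center `C` to the crossing point to its east, and measure the other edges
there by `e`. The neighbors of `C` to the north and south, hence the right-hand sides of (c) at both
ends of `e`, become rational functions of these ratios, except for the horizontal term at `C`.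
Subtracting the two instances of (c) gives one complex equation for this term. Its real part is
known because the edges of `C` to the east and west have equal length, and this is (a). Its
imaginary part is also a rational function of the ratios of radii, by following the quadrilateral to
the south-west of `C`, and this is (b).
-/

open Complex

noncomputable section

/-- Vertex set of the elementary quadrilateral at `(n,m)`. -/
def quadVerts (f : ℕ → ℕ → ℂ) (n m : ℕ) : Set ℂ :=
  {f n m, f (n+1) m, f (n+1) (m+1), f n (m+1)}

/-- Interior of the convex hull of the elementary quadrilateral at `(n,m)`. -/
def quadInt (f : ℕ → ℕ → ℂ) (n m : ℕ) : Set ℂ :=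
  interior (convexHull ℝ (quadVerts f n m))

/-- `f` is an immersion: interiors of (convex hulls of) adjacent elementary
quadrilaterals are disjoint. -/
def IsImmersion (f : ℕ → ℕ → ℂ) : Prop :=
  ∀ n m : ℕ,
    Disjoint (quadInt f n m) (quadInt f (n+1) m) ∧
    Disjoint (quadInt f n m) (quadInt f n (m+1))

/-- The cross-ratio equation (q). -/
def CrossRatioEq (f : ℕ → ℕ → ℂ) : Prop :=
  ∀ n m : ℕ,
    (f n m - f (n+1) m) * (f (n+1) (m+1) - f n (m+1)) =
      -((f (n+1) m - f (n+1) (m+1)) * (f n (m+1) - f n m))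

/-- Nonvanishing of the denominators occurring in (q). -/
def QDenomNonzero (f : ℕ → ℕ → ℂ) : Prop :=
  ∀ n m : ℕ, f (n+1) m - f (n+1) (m+1) ≠ 0 ∧ f n (m+1) - f n m ≠ 0

/-- Nonvanishing of the denominators occurring in (c). -/
def CDenomNonzero (f : ℕ → ℕ → ℂ) : Prop :=
  ∀ n m : ℕ, (n ≠ 0 → f (n+1) m - f (n-1) m ≠ 0) ∧ (m ≠ 0 → f n (m+1) - f n (m-1) ≠ 0)

/-- The constraint (c) with parameter `γ`; for `n = 0` (resp. `m = 0`) the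
corresponding term is absent. -/
def ConstraintC (γ : ℂ) (f : ℕ → ℕ → ℂ) : Prop :=
  ∀ n m : ℕ,
    γ * f n m =
      (if n = 0 then 0 else
        2 * (n : ℂ) * ((f (n+1) m - f n m) * (f n m - f (n-1) m)) / (f (n+1) m - f (n-1) m)) +
      (if m = 0 then 0 else
        2 * (m : ℂ) * ((f n (m+1) - f n m) * (f n m - f n (m-1))) / (f n (m+1) - f n (m-1)))

/-- The radius function `R(N + iM) = |f_{n+1,m} - f_{n,m}|` with `n = N + M`,
`m = M - N`, defined on the lattice `ℤ + iℤ` indexed by pairs `(N, M)`. -/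
def radiusOf (f : ℕ → ℕ → ℂ) (N M : ℤ) : ℝ :=
  ‖f ((N + M).toNat + 1) ((M - N).toNat) - f ((N + M).toNat) ((M - N).toNat)‖

/-- Equation (Ri) for a radius function at `z = N + iM`. -/
def RiEq (R : ℤ → ℤ → ℝ) (N M : ℤ) : Prop :=
  ((N + M : ℤ) : ℝ) * (R N M ^ 2 - R (N+1) M * R N (M-1)) * (R N (M+1) + R (N+1) M) +
  ((M - N : ℤ) : ℝ) * (R N M ^ 2 - R N (M+1) * R (N+1) M) * (R (N+1) M + R N (M-1)) = 0

open scoped InnerProductSpace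

lemma add_ne_zero_of_mul_pos {R : Type*} [Ring R] [LinearOrder R] [IsStrictOrderedRing R] {a b : R}
    (h : 0 < a * b) : a + b ≠ 0 := by
  rcases pos_and_pos_or_neg_and_neg_of_mul_pos h with ⟨ha, hb⟩ | ⟨ha, hb⟩
  exacts [(add_pos ha hb).ne', (add_neg ha hb).ne]

lemma inner_mul_mul_right (u v w : ℂ) : ⟪u * w, v * w⟫_ℝ = ‖w‖ ^ 2 * ⟪u, v⟫_ℝ := by
  rw [← normSq_eq_norm_sq]
  simp only [Complex.inner, map_mul, normSq_apply, mul_re, mul_im, conj_re, conj_im]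
  ring

lemma exists_eq_I_mul_of_inner_eq_zero {u v : ℂ} (hu : u ≠ 0) (hv : v ≠ 0) (h : ⟪u, v⟫_ℝ = 0) :
    ∃ t : ℝ, t ≠ 0 ∧ u = I * t * v := by
  have hre : (u / v).re = 0 := by
    have hinner := inner_mul_mul_right 1 (u / v) v
    rw [div_mul_cancel₀ u hv, one_mul, real_inner_comm, h, zero_eq_mul] at hinner
    simpa [Complex.inner, hv] using hinner
  have hut : u = I * (u / v).im * v := by
    rw [← div_eq_iff hv]
    apply Complex.ext <;> simp [hre]
  refine ⟨(u / v).im, fun ht ↦ hu ?_, hut⟩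
  rw [hut, ht]
  simp

lemma one_add_I_mul_ofReal_ne_zero (t : ℝ) : 1 + I * t ≠ 0 :=
  fun h ↦ by simpa using congrArg re h

lemma one_sub_I_mul_ofReal_ne_zero (t : ℝ) : 1 - I * t ≠ 0 :=
  fun h ↦ by simpa using congrArg re h

lemma re_div_add_of_norm_eq {u v : ℂ} (h : ‖u‖ = ‖v‖) (huv : u + v ≠ 0) :
    (u / (u + v)).re = 1 / 2 := by
  have hns : normSq u = normSq v := by rw [normSq_eq_norm_sq, normSq_eq_norm_sq, h]
  rw [div_re, ← add_div, div_eq_iff (normSq_eq_zero.not.2 huv)]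
  simp only [normSq_apply, add_re, add_im] at hns ⊢
  linear_combination (1 / 2) * hns

lemma not_collinear_of_inner_eq_zero {V : Type*} [NormedAddCommGroup V] [InnerProductSpace ℝ V]
    {P Q A : V} (hQ : Q ≠ P) (hA : A ≠ P) (h : ⟪Q - P, A - P⟫_ℝ = 0) :
    ¬ Collinear ℝ {P, Q, A} := by
  have hangle : EuclideanGeometry.angle Q P A = Real.pi / 2 :=
    (InnerProductGeometry.inner_eq_zero_iff_angle_eq_pi_div_two _ _).1 h
  rw [Set.insert_comm, EuclideanGeometry.collinear_iff_eq_or_eq_or_angle_eq_zero_or_angle_eq_pi,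
    hangle]
  rintro (h | h | h | h)
  exacts [hQ h, hA h, by linarith [Real.pi_pos], by linarith [Real.pi_pos]]

section Overlap

variable {V : Type*} [NormedAddCommGroup V] [NormedSpace ℝ V]

lemma interior_convexHull_triangle_nonempty (hV : Module.finrank ℝ V = 2) {P Q A : V}
    (h : ¬ Collinear ℝ {P, Q, A}) : (interior (convexHull ℝ {P, Q, A})).Nonempty := by
  have : FiniteDimensional ℝ V := .of_finrank_eq_succ hV
  have hind := affineIndependent_iff_not_collinear_set.2 h
  have hspan := hind.affineSpan_eq_top_iff_card_eq_finrank_add_one.2 (by simp [hV])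
  rw [interior_convexHull_nonempty_iff_affineSpan_eq_top, ← hspan, Matrix.range_cons,
    Matrix.range_cons_cons_empty, Set.singleton_union]

lemma convexHull_triangle_subset_of_wbtw {P A B : V} (Q : V) (h : Wbtw ℝ P A B) :
    convexHull ℝ {P, Q, A} ⊆ convexHull ℝ {P, Q, B} := by
  refine convexHull_min ?_ (convex_convexHull ℝ _)
  have hA : A ∈ convexHull ℝ {P, Q, B} :=
    segment_subset_convexHull (by simp) (by simp) (mem_segment_iff_wbtw.2 h)
  rintro X (rfl | rfl | rfl)
  exacts [subset_convexHull ℝ _ (by simp), subset_convexHull ℝ _ (by simp), hA]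

lemma not_disjoint_interior_convexHull_of_sameRay (hV : Module.finrank ℝ V = 2) {P Q A B : V}
    (hA : ¬ Collinear ℝ {P, Q, A}) (hB : ¬ Collinear ℝ {P, Q, B})
    (h : SameRay ℝ (A - P) (B - P)) :
    ¬ Disjoint (interior (convexHull ℝ {P, Q, A})) (interior (convexHull ℝ {P, Q, B})) := by
  rcases wbtw_total_of_sameRay_vsub_left (x := P) (y := A) (z := B) h with hw | hw
  · have hsub := interior_mono (convexHull_triangle_subset_of_wbtw Q hw)
    exact Set.Nonempty.not_disjoint <|
      (interior_convexHull_triangle_nonempty hV hA).mono (Set.subset_inter subset_rfl hsub)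
  · have hsub := interior_mono (convexHull_triangle_subset_of_wbtw Q hw)
    exact Set.Nonempty.not_disjoint <|
      (interior_convexHull_triangle_nonempty hV hB).mono (Set.subset_inter hsub subset_rfl)

end Overlap

lemma exists_pos_sub_eq_mul_of_disjoint_interior_convexHull {P Q A B : ℂ} {X Y : Set ℂ}
    (hX : {P, Q, A} ⊆ X) (hY : {P, Q, B} ⊆ Y) (hQ : Q ≠ P) (hA : A ≠ P) (hB : B ≠ P)
    (hQA : ⟪Q - P, A - P⟫_ℝ = 0) (hQB : ⟪Q - P, B - P⟫_ℝ = 0)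
    (hXY : Disjoint (interior (convexHull ℝ X)) (interior (convexHull ℝ Y))) :
    ∃ x : ℝ, 0 < x ∧ B - P = x * (P - A) := by
  obtain ⟨s, hs, hAs⟩ := exists_eq_I_mul_of_inner_eq_zero (sub_ne_zero.2 hA) (sub_ne_zero.2 hQ)
    (real_inner_comm (A - P) (Q - P) ▸ hQA)
  obtain ⟨t, -, hBt⟩ := exists_eq_I_mul_of_inner_eq_zero (sub_ne_zero.2 hB) (sub_ne_zero.2 hQ)
    (real_inner_comm (B - P) (Q - P) ▸ hQB)
  have hsC : (s : ℂ) ≠ 0 := ofReal_ne_zero.2 hs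
  have hBA : B - P = (t / s) • (A - P) := by
    rw [hAs, hBt, real_smul]
    push_cast
    field_simp
  have hneg : t / s < 0 := by
    by_contra! hnonneg
    refine not_disjoint_interior_convexHull_of_sameRay finrank_real_complex
      (not_collinear_of_inner_eq_zero hQ hA hQA) (not_collinear_of_inner_eq_zero hQ hB hQB) ?_
      (hXY.mono (interior_mono (convexHull_mono hX)) (interior_mono (convexHull_mono hY)))
    rw [hBA]
    exact SameRay.sameRay_nonneg_smul_right _ hnonneg
  refine ⟨-(t / s), neg_pos.2 hneg, ?_⟩
  rw [hBA, real_smul]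
  push_cast
  ring

/-- A non-degenerate quadrilateral, with vertices in cyclic order, of cross-ratio `-1`: the
elementary quadrilaterals of a solution of (q). -/
structure HarmonicQuad (a b c d : ℂ) : Prop where
  cross_ratio : (a - b) * (c - d) = -((b - c) * (d - a))
  ab_ne : b ≠ a
  bc_ne : c ≠ b
  cd_ne : d ≠ c
  da_ne : a ≠ d

/-- The condition satisfied by the two edges `u`, `v` that leave a vertex of parity `k` in a kite
with right angles at its odd vertices: at an even vertex (a circle center) they are radii of the
same circle, at an odd vertex (a point where circles cross) they are orthogonal. -/
structure KiteCorner (k : ℕ) (u v : ℂ) : Prop where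
  norm_eq : Even k → ‖u‖ = ‖v‖
  inner_eq_zero : Odd k → ⟪u, v⟫_ℝ = 0

namespace KiteCorner

variable {k : ℕ} {u v w x : ℂ}

lemma symm (h : KiteCorner k u v) : KiteCorner k v u :=
  ⟨fun hk ↦ (h.norm_eq hk).symm, fun hk ↦ real_inner_comm v u ▸ h.inner_eq_zero hk⟩

lemma trans_trans (huv : KiteCorner k u v) (hvw : KiteCorner k v w) (hwx : KiteCorner k w x)
    (hu : u ≠ 0) (hv : v ≠ 0) (hw : w ≠ 0) : KiteCorner k u x := by
  refine ⟨fun hk ↦ ((huv.norm_eq hk).trans (hvw.norm_eq hk)).trans (hwx.norm_eq hk),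
    fun hk ↦ ?_⟩
  obtain ⟨s, -, rfl⟩ := exists_eq_I_mul_of_inner_eq_zero hu hv (huv.inner_eq_zero hk)
  obtain ⟨t, -, rfl⟩ := exists_eq_I_mul_of_inner_eq_zero hv hw (hvw.inner_eq_zero hk)
  have hsmul : I * s * (I * t * w) = (-(s * t)) • w := by
    rw [real_smul]
    push_cast
    linear_combination s * t * w * I_sq
  rw [hsmul, real_inner_smul_left, hwx.inner_eq_zero hk, mul_zero]

end KiteCorner

namespace HarmonicQuad

variable {a b c d : ℂ}

lemma rotate (h : HarmonicQuad a b c d) : HarmonicQuad b c d a :=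
  ⟨by linear_combination h.cross_ratio, h.bc_ne, h.cd_ne, h.da_ne, h.ab_ne⟩

lemma reflect (h : HarmonicQuad a b c d) : HarmonicQuad a d c b :=
  ⟨by linear_combination h.cross_ratio, h.da_ne.symm, h.cd_ne.symm, h.bc_ne.symm, h.ab_ne.symm⟩

lemma sub_mul_add (h : HarmonicQuad a b c d) :
    (c - b) * ((b - a) + (d - a)) = ((d - a) - (b - a)) * (b - a) := by
  linear_combination -h.cross_ratio

lemma add_ne_zero (h : HarmonicQuad a b c d) : (b - a) + (d - a) ≠ 0 := by
  intro hsum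
  have hprod : 2 * (b - a) * (d - a) = 0 := by
    linear_combination h.cross_ratio + (c - a) * hsum
  simp [sub_ne_zero.2 h.ab_ne, sub_ne_zero.2 h.da_ne.symm] at hprod

lemma sub_mul_one_add {w : ℂ} (h : HarmonicQuad a b c d) (hw : d - a = w * (b - a)) :
    (c - b) * (1 + w) = (w - 1) * (b - a) := by
  apply mul_right_cancel₀ (sub_ne_zero.2 h.ab_ne)
  linear_combination h.sub_mul_add - (c - b - (b - a)) * hw

lemma sub_eq_neg_mul {w : ℂ} (h : HarmonicQuad a b c d) (hw : d - a = w * (b - a)) :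
    d - c = -w * (b - c) := by
  apply mul_right_cancel₀ (sub_ne_zero.2 h.ab_ne)
  linear_combination h.cross_ratio + (c - b) * hw

-- With `p = b - a` and `q = d - a` the cross-ratio equation is `(c - b) (p + q) = (q - p) p`, and
-- `|p| = |q|` iff `p + q ⊥ q - p`, while `p ⊥ q` iff `|p + q| = |q - p|`.
lemma corner_next {k : ℕ} (h : HarmonicQuad a b c d) (hk : KiteCorner k (b - a) (d - a)) :
    KiteCorner (k + 1) (c - b) (a - b) := by
  have hcb := h.sub_mul_add
  have hpq := h.add_ne_zero
  set p := b - a with hp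
  set q := d - a
  rw [show a - b = -p by rw [hp, neg_sub]]
  refine ⟨fun hodd ↦ ?_, fun heven ↦ ?_⟩
  · have hnorm : ‖p + q‖ = ‖q - p‖ := by
      rw [norm_sub_rev, InnerProductGeometry.norm_add_eq_norm_sub_iff_angle_eq_pi_div_two,
        ← InnerProductGeometry.inner_eq_zero_iff_angle_eq_pi_div_two]
      exact hk.inner_eq_zero (by simpa [parity_simps] using hodd)
    rw [norm_neg]
    apply mul_right_cancel₀ (norm_ne_zero_iff.2 hpq)
    rw [← norm_mul, hcb, norm_mul, hnorm, mul_comm]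
  · have hperp : ⟪q - p, p + q⟫_ℝ = 0 := by
      rw [real_inner_comm, add_comm, real_inner_add_sub_eq_zero_iff]
      exact (hk.norm_eq (by simpa [parity_simps] using heven)).symm
    have hinner : ⟪(c - b) * (p + q), p * (p + q)⟫_ℝ = 0 := by
      rw [hcb, mul_comm p, inner_mul_mul_right, hperp, mul_zero]
    rw [inner_mul_mul_right, mul_eq_zero] at hinner
    rw [inner_neg_right, neg_eq_zero]
    exact hinner.resolve_left (by simpa using hpq)

lemma corner_prev {k : ℕ} (h : HarmonicQuad a b c d) (hk : KiteCorner k (b - a) (d - a)) :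
    KiteCorner (k + 1) (a - d) (c - d) :=
  (h.reflect.corner_next hk.symm).symm

lemma corner_opposite {k : ℕ} (h : HarmonicQuad a b c d) (hk : KiteCorner k (b - a) (d - a)) :
    KiteCorner (k + 2) (d - c) (b - c) :=
  h.rotate.corner_next (h.corner_next hk)

end HarmonicQuad

lemma ConstraintC.eq {γ : ℂ} {f : ℕ → ℕ → ℂ} (hc : ConstraintC γ f) (n m : ℕ) :
    γ * f n m =
      2 * n * ((f (n + 1) m - f n m) * (f n m - f (n - 1) m) / (f (n + 1) m - f (n - 1) m)) +
      2 * m * ((f n (m + 1) - f n m) * (f n m - f n (m - 1)) / (f n (m + 1) - f n (m - 1))) := by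
  rw [hc n m]
  split_ifs with hn hm hm <;> simp [hn, hm, mul_div_assoc]

/-- A net on the quarter plane all of whose elementary quadrilaterals are harmonic: a
non-degenerate solution of (q). -/
def IsHarmonicNet (f : ℕ → ℕ → ℂ) : Prop :=
  ∀ n m : ℕ, HarmonicQuad (f n m) (f (n + 1) m) (f (n + 1) (m + 1)) (f n (m + 1))

lemma CrossRatioEq.isHarmonicNet {f : ℕ → ℕ → ℂ} (hq : CrossRatioEq f) (hqd : QDenomNonzero f) :
    IsHarmonicNet f := by
  intro n m
  obtain ⟨hbc, hda⟩ := hqd n m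
  have hprod : (f n m - f (n + 1) m) * (f (n + 1) (m + 1) - f n (m + 1)) ≠ 0 := by
    rw [hq n m]
    exact neg_ne_zero.2 (mul_ne_zero hbc hda)
  exact ⟨hq n m, (sub_ne_zero.1 (left_ne_zero_of_mul hprod)).symm, (sub_ne_zero.1 hbc).symm,
    (sub_ne_zero.1 (right_ne_zero_of_mul hprod)).symm, (sub_ne_zero.1 hda).symm⟩

lemma IsHarmonicNet.west_of_west_mul {f : ℕ → ℕ → ℂ} (H : IsHarmonicNet f) {n m : ℕ} {t : ℝ}
    (hSW : f n m - f (n + 1) m = I * t * (f (n + 1) (m + 1) - f (n + 1) m)) :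
    (f n (m + 1) - f (n + 1) (m + 1)) * (1 + I * t) =
      (1 - I * t) * (f (n + 1) m - f (n + 1) (m + 1)) := by
  linear_combination (H n m).rotate.sub_mul_one_add hSW

section Axis

variable {γ : ℝ} {g : ℕ → ℂ}

/-- The constraint (c) along a coordinate axis, cleared of denominators. -/
def AxisConstraint (γ : ℝ) (g : ℕ → ℂ) : Prop :=
  γ * g 0 = 0 ∧ ∀ k : ℕ, γ * g (k + 1) * (g (k + 2) - g k) =
    2 * (k + 1) * (g (k + 2) - g (k + 1)) * (g (k + 1) - g k)

lemma AxisConstraint.of_div (h : ∀ k : ℕ, γ * g k =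
    2 * k * ((g (k + 1) - g k) * (g k - g (k - 1)) / (g (k + 1) - g (k - 1))))
    (hg : ∀ k, g (k + 2) - g k ≠ 0) : AxisConstraint γ g := by
  refine ⟨by simpa using h 0, fun k ↦ ?_⟩
  have hk := h (k + 1)
  simp only [Nat.add_sub_cancel, add_assoc, Nat.reduceAdd] at hk
  rw [hk]
  field_simp [hg k]
  push_cast
  ring

namespace AxisConstraint

lemma edge_succ_of_vertex (hc : AxisConstraint γ g) {k : ℕ} (hk : g (k + 1) ≠ g k)
    (h : γ * g k = k * (g (k + 1) - g k)) :
    (k + 2 - γ) * (g (k + 2) - g (k + 1)) = (k + γ) * (g (k + 1) - g k) := by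
  apply mul_right_cancel₀ (sub_ne_zero.2 hk)
  linear_combination (g (k + 2) - g k) * h - hc.2 k

lemma edge_succ_eq_of_vertex (hc : AxisConstraint γ g) {k : ℕ} (hk : g (k + 1) ≠ g k)
    (h : γ * g (k + 1) = (k + 1) * (g (k + 1) - g k)) :
    g (k + 2) - g (k + 1) = g (k + 1) - g k := by
  apply mul_left_cancel₀ (mul_ne_zero (Nat.cast_add_one_ne_zero k) (sub_ne_zero.2 hk))
  linear_combination (g (k + 2) - g k) * h - hc.2 k

lemma vertex_of_even (hc : AxisConstraint γ g) (hg : ∀ k, g (k + 1) ≠ g k) {k : ℕ}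
    (hk : Even k) : γ * g k = k * (g (k + 1) - g k) := by
  rw [even_iff_exists_two_mul] at hk
  obtain ⟨j, rfl⟩ := hk
  induction j with
  | zero => simpa using hc.1
  | succ j ih =>
    have hedge := hc.edge_succ_of_vertex (hg _) ih
    have hvertex : γ * g (2 * j + 1 + 1) =
        ((2 * j + 1 : ℕ) + 1) * (g (2 * j + 1 + 1) - g (2 * j + 1)) := by
      push_cast at ih hedge ⊢
      linear_combination ih - hedge
    have heq := hc.edge_succ_eq_of_vertex (hg _) hvertex
    change γ * g (2 * j + 1 + 1) = (2 * j + 1 + 1 : ℕ) * (g (2 * j + 1 + 2) - g (2 * j + 1 + 1))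
    rw [heq, hvertex]
    push_cast
    ring

lemma exists_edge_succ_eq_mul_of_even (hc : AxisConstraint γ g) (hg : ∀ k, g (k + 1) ≠ g k)
    {k : ℕ} (hk : Even k) : ∃ t : ℝ, g (k + 2) - g (k + 1) = t * (g (k + 1) - g k) := by
  have hedge := hc.edge_succ_of_vertex (hg k) (hc.vertex_of_even hg hk)
  have hne : (k + 2 - γ : ℂ) ≠ 0 := by
    intro h0
    rw [h0, zero_mul, eq_comm, mul_eq_zero] at hedge
    have hγ := hedge.resolve_right (sub_ne_zero.2 (hg k))
    exact Nat.cast_add_one_ne_zero (R := ℂ) k (by linear_combination (h0 + hγ) / 2)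
  refine ⟨(k + γ) / (k + 2 - γ), ?_⟩
  push_cast
  rw [div_mul_eq_mul_div, ← hedge, mul_div_cancel_left₀ _ hne]

lemma edge_succ_eq_of_odd (hc : AxisConstraint γ g) (hg : ∀ k, g (k + 1) ≠ g k) {k : ℕ}
    (hk : Odd k) : g (k + 2) - g (k + 1) = g (k + 1) - g k := by
  obtain ⟨j, rfl⟩ := hk
  have heven : Even (2 * j) := even_two_mul j
  have hvertex := hc.vertex_of_even hg heven
  have hedge := hc.edge_succ_of_vertex (hg _) hvertex
  apply hc.edge_succ_eq_of_vertex (hg _)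
  push_cast at hvertex hedge ⊢
  linear_combination hvertex - hedge

lemma kiteCorner_step (hc : AxisConstraint γ g) (hg : ∀ k, g (k + 1) ≠ g k) {k : ℕ} {v : ℂ}
    (h : KiteCorner (k + 1) v (g k - g (k + 1))) :
    KiteCorner (k + 1) (g (k + 2) - g (k + 1)) v := by
  refine ⟨fun hk ↦ ?_, fun hk ↦ ?_⟩
  · rw [hc.edge_succ_eq_of_odd hg (by simpa [parity_simps] using hk), h.norm_eq hk, norm_sub_rev]
  · obtain ⟨t, ht⟩ := hc.exists_edge_succ_eq_mul_of_even hg (by simpa [parity_simps] using hk)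
    have hv : ⟪g (k + 1) - g k, v⟫_ℝ = 0 := by
      rw [← neg_sub, inner_neg_left, real_inner_comm, h.inner_eq_zero hk, neg_zero]
    rw [ht, ← real_smul, real_inner_smul_left, hv, mul_zero]

end AxisConstraint

end Axis

/-- A circle pattern with the combinatorics of the square grid: every elementary quadrilateral is
harmonic and is a kite, the vertices with `n + m` even being the centers of the circles and those
with `n + m` odd the intersection points of orthogonal circles. The conditions at the remaining
corners of a quadrilateral follow from the one at `(n, m)`. -/
structure IsKiteNet (f : ℕ → ℕ → ℂ) : Prop where
  isHarmonicNet : IsHarmonicNet f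
  corner (n m : ℕ) : KiteCorner (n + m) (f (n + 1) m - f n m) (f n (m + 1) - f n m)

namespace IsKiteNet

variable {γ : ℝ} {f : ℕ → ℕ → ℂ}

lemma corner_axis_left (H : IsHarmonicNet f) (hx : AxisConstraint γ (f · 0))
    (h0 : ‖f 1 0 - f 0 0‖ = ‖f 0 1 - f 0 0‖) (n : ℕ) :
    KiteCorner n (f (n + 1) 0 - f n 0) (f n 1 - f n 0) := by
  induction n with
  | zero => exact ⟨fun _ ↦ h0, by simp⟩
  | succ n ih => exact hx.kiteCorner_step (fun k ↦ (H k 0).ab_ne) ((H n 0).corner_next ih)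

lemma corner_axis_right (H : IsHarmonicNet f) (hy : AxisConstraint γ (f 0))
    (h0 : ‖f 1 0 - f 0 0‖ = ‖f 0 1 - f 0 0‖) (m : ℕ) :
    KiteCorner m (f 1 m - f 0 m) (f 0 (m + 1) - f 0 m) := by
  induction m with
  | zero => exact ⟨fun _ ↦ h0, by simp⟩
  | succ m ih =>
    exact (hy.kiteCorner_step (fun k ↦ (H 0 k).da_ne.symm) ((H 0 m).corner_prev ih).symm).symm

-- Around an interior vertex, the corners of the three quadrilaterals to the south-east, south-west
-- and north-west determine the fourth one.
lemma corner_interior (H : IsHarmonicNet f) {n m : ℕ}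
    (hSE : KiteCorner (n + 1 + m) (f (n + 2) m - f (n + 1) m) (f (n + 1) (m + 1) - f (n + 1) m))
    (hSW : KiteCorner (n + m) (f (n + 1) m - f n m) (f n (m + 1) - f n m))
    (hNW : KiteCorner (n + (m + 1)) (f (n + 1) (m + 1) - f n (m + 1))
      (f n (m + 2) - f n (m + 1))) :
    KiteCorner (n + 1 + (m + 1)) (f (n + 2) (m + 1) - f (n + 1) (m + 1))
      (f (n + 1) (m + 2) - f (n + 1) (m + 1)) := by
  have hES := ((H (n + 1) m).corner_prev hSE).symm
  have hSW' := ((H n m).corner_opposite hSW).symm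
  have hWN := ((H n (m + 1)).corner_next hNW).symm
  rw [show n + m + 2 = n + 1 + m + 1 by ring] at hSW'
  rw [show n + (m + 1) + 1 = n + 1 + m + 1 by ring] at hWN
  exact hES.trans_trans hSW' hWN (sub_ne_zero.2 (H (n + 1) (m + 1)).ab_ne)
    (sub_ne_zero.2 (H n m).bc_ne.symm) (sub_ne_zero.2 (H n m).cd_ne)

lemma of_axisConstraint (H : IsHarmonicNet f) (hx : AxisConstraint γ (f · 0))
    (hy : AxisConstraint γ (f 0)) (h0 : ‖f 1 0 - f 0 0‖ = ‖f 0 1 - f 0 0‖) : IsKiteNet f := by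
  refine ⟨H, fun n m ↦ ?_⟩
  induction m generalizing n with
  | zero => exact corner_axis_left H hx h0 n
  | succ m ihm =>
    induction n with
    | zero => simpa using corner_axis_right H hy h0 (m + 1)
    | succ n ihn => exact corner_interior H (ihm (n + 1)) (ihm n) ihn

lemma of_constraintC (hq : CrossRatioEq f) (hqd : QDenomNonzero f) (hc : ConstraintC γ f)
    (hcd : CDenomNonzero f) (h0 : ‖f 1 0 - f 0 0‖ = ‖f 0 1 - f 0 0‖) : IsKiteNet f := by
  refine of_axisConstraint (hq.isHarmonicNet hqd) (γ := γ) ?_ ?_ h0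
  · exact .of_div (fun k ↦ by simpa using hc.eq k 0) fun k ↦ (hcd (k + 1) 0).1 k.succ_ne_zero
  · exact .of_div (fun k ↦ by simpa using hc.eq 0 k) fun k ↦ (hcd 0 (k + 1)).2 k.succ_ne_zero

lemma norm_north_eq_east (K : IsKiteNet f) {n m : ℕ} (h : Even (n + m)) :
    ‖f n (m + 1) - f n m‖ = ‖f (n + 1) m - f n m‖ :=
  ((K.corner n m).norm_eq h).symm

lemma norm_south_eq_east (K : IsKiteNet f) {n m : ℕ} (h : Even (n + m + 1)) :
    ‖f n m - f n (m + 1)‖ = ‖f (n + 1) (m + 1) - f n (m + 1)‖ :=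
  ((K.isHarmonicNet n m).corner_prev (K.corner n m)).norm_eq h

lemma norm_west_eq_east (K : IsKiteNet f) {n m : ℕ} (h : Even (n + m + 1)) :
    ‖f n m - f (n + 1) m‖ = ‖f (n + 2) m - f (n + 1) m‖ :=
  (((K.isHarmonicNet n m).corner_next (K.corner n m)).norm_eq h).symm.trans
    (K.norm_north_eq_east (by rwa [add_right_comm]))

lemma re_horizontal_term (K : IsKiteNet f) (hcd : CDenomNonzero f) {n m : ℕ}
    (hpar : Odd (n + m)) :
    ((2 * n : ℝ) * ((f n (m + 1) - f (n - 1) (m + 1)) /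
      (f (n + 1) (m + 1) - f (n - 1) (m + 1)))).re = n := by
  cases n with
  | zero => simp
  | succ k =>
    have hnorm : ‖f (k + 1) (m + 1) - f k (m + 1)‖ = ‖f (k + 2) (m + 1) - f (k + 1) (m + 1)‖ := by
      rw [norm_sub_rev, K.norm_west_eq_east (by grind)]
    have hre := re_div_add_of_norm_eq hnorm
      (by simpa using (hcd (k + 1) (m + 1)).1 k.succ_ne_zero)
    rw [sub_add_sub_cancel'] at hre
    rw [re_ofReal_mul, Nat.add_sub_cancel, hre]
    ring

end IsKiteNet

/-- The four edges at the vertex `(n + 1, m + 1)`, where circles meet, measured by the edge `e` that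
enters it from the west: those to the east, north and south are `x * e`, `I * y * e` and
`-(I * z * e)`. -/
structure StarCoords (f : ℕ → ℕ → ℂ) (n m : ℕ) (x y z : ℝ) : Prop where
  x_pos : 0 < x
  yz_pos : 0 < y * z
  east : f (n + 2) (m + 1) - f (n + 1) (m + 1) = x * (f (n + 1) (m + 1) - f n (m + 1))
  north : f (n + 1) (m + 2) - f (n + 1) (m + 1) = I * y * (f (n + 1) (m + 1) - f n (m + 1))
  south : f (n + 1) m - f (n + 1) (m + 1) = -(I * z * (f (n + 1) (m + 1) - f n (m + 1)))

lemma IsKiteNet.exists_starCoords {f : ℕ → ℕ → ℂ} (K : IsKiteNet f) (himm : IsImmersion f)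
    {n m : ℕ} (h : Odd (n + m)) : ∃ x y z : ℝ, StarCoords f n m x y z := by
  have hSW := K.isHarmonicNet n m
  have hNW := K.isHarmonicNet n (m + 1)
  have hNE := K.isHarmonicNet (n + 1) (m + 1)
  have hW_perp_S := (hSW.corner_opposite (K.corner n m)).inner_eq_zero (by grind)
  have hN_perp_W := (hNW.corner_next (K.corner n (m + 1))).inner_eq_zero (by grind)
  have hW_perp_N := (hNW.corner_next (K.corner n (m + 1))).symm.inner_eq_zero (by grind)
  have hN_perp_E := (K.corner (n + 1) (m + 1)).symm.inner_eq_zero (by grind)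
  obtain ⟨x, hx, hE⟩ := exists_pos_sub_eq_mul_of_disjoint_interior_convexHull
    (by simp [quadVerts, Set.insert_subset_iff]) (by simp [quadVerts, Set.insert_subset_iff])
    hNE.da_ne.symm hSW.cd_ne hNE.ab_ne hN_perp_W hN_perp_E (himm n (m + 1)).1
  obtain ⟨t, ht, hN⟩ := exists_eq_I_mul_of_inner_eq_zero (sub_ne_zero.2 hNE.da_ne.symm)
    (sub_ne_zero.2 hSW.cd_ne) hN_perp_W
  obtain ⟨s, hs, hS⟩ := exists_pos_sub_eq_mul_of_disjoint_interior_convexHull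
    (by simp [quadVerts, Set.insert_subset_iff]) (by simp [quadVerts, Set.insert_subset_iff])
    hSW.cd_ne hNE.da_ne.symm hSW.bc_ne.symm hW_perp_N hW_perp_S
    (himm n m).2.symm
  refine ⟨x, -t, s * -t, hx, ?_, hE, ?_, ?_⟩
  · rw [mul_left_comm]
    exact mul_pos hs (mul_self_pos.2 (neg_ne_zero.2 ht))
  · rw [hN]
    push_cast
    ring
  · rw [hS, ← neg_sub, hN]
    push_cast
    ring

namespace StarCoords

variable {γ : ℝ} {f : ℕ → ℕ → ℂ} {n m : ℕ} {x y z : ℝ}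

lemma gamma_mul_crossing_eq (h : StarCoords f n m x y z) (H : IsHarmonicNet f)
    (hc : ConstraintC γ f) :
    γ * f (n + 1) (m + 1) = (f (n + 1) (m + 1) - f n (m + 1)) *
      (2 * (n + 1) * x / (1 + x) + I * (2 * (m + 1) * y * z / (y + z))) := by
  have hx : (1 + x : ℂ) ≠ 0 := mod_cast (add_pos one_pos h.x_pos).ne'
  have hyz : (y + z : ℂ) ≠ 0 := mod_cast add_ne_zero_of_mul_pos h.yz_pos
  have he := sub_ne_zero.2 (H n (m + 1)).ab_ne
  rw [hc.eq, Nat.add_sub_cancel, Nat.add_sub_cancel]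
  set e := f (n + 1) (m + 1) - f n (m + 1) with he_def
  have hEW : f (n + 2) (m + 1) - f n (m + 1) = (1 + x) * e := by
    linear_combination h.east - he_def
  have hNS : f (n + 1) (m + 2) - f (n + 1) m = I * (y + z) * e := by
    linear_combination h.north - h.south
  rw [hEW, hNS, h.east, h.north, ← neg_sub (f (n + 1) m), h.south, ← he_def]
  push_cast
  field_simp

lemma north_of_west_mul (h : StarCoords f n m x y z) (H : IsHarmonicNet f) :
    (f n (m + 2) - f n (m + 1)) * (1 - I * y) =
      (1 + I * y) * (f (n + 1) (m + 1) - f n (m + 1)) := by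
  have hquad := (H n (m + 1)).rotate.reflect.sub_mul_one_add (w := -(I * y))
    (by linear_combination h.north)
  linear_combination hquad

lemma south_of_west_mul (h : StarCoords f n m x y z) (H : IsHarmonicNet f) :
    (f n m - f n (m + 1)) * (1 + I * z) = (1 - I * z) * (f (n + 1) (m + 1) - f n (m + 1)) := by
  have hquad := (H n m).rotate.rotate.sub_mul_one_add (w := I * z)
    (by linear_combination h.south)
  linear_combination hquad

lemma vertical_term_west (h : StarCoords f n m x y z) (H : IsHarmonicNet f) :
    (f n (m + 2) - f n (m + 1)) * (f n (m + 1) - f n m) / (f n (m + 2) - f n m) =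
      (f (n + 1) (m + 1) - f n (m + 1)) * ((z - y + I * (1 + y * z)) / (y + z) / 2) := by
  have hyz : (y + z : ℂ) ≠ 0 := mod_cast add_ne_zero_of_mul_pos h.yz_pos
  have hy := one_sub_I_mul_ofReal_ne_zero y
  have hz := one_add_I_mul_ofReal_ne_zero z
  have he := sub_ne_zero.2 (H n (m + 1)).ab_ne
  have hN := eq_div_of_mul_eq hy (h.north_of_west_mul H)
  have hS := eq_div_of_mul_eq hz (h.south_of_west_mul H)
  set e := f (n + 1) (m + 1) - f n (m + 1)
  have hNS : f n (m + 2) - f n m = 2 * I * (y + z) * e / ((1 - I * y) * (1 + I * z)) := by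
    rw [← sub_sub_sub_cancel_right _ _ (f n (m + 1)), hN, hS]
    field_simp
    ring
  rw [hNS, ← neg_sub (f n m), hN, hS]
  field_simp
  linear_combination -I_sq

/-- Subtracting the constraints at the two ends of the edge `e`, divided by `e`. -/
lemma horizontal_term_eq (h : StarCoords f n m x y z) (H : IsHarmonicNet f) (hc : ConstraintC γ f) :
    (2 * n : ℝ) * ((f n (m + 1) - f (n - 1) (m + 1)) / (f (n + 1) (m + 1) - f (n - 1) (m + 1))) =
      ((2 * (n + 1) * x / (1 + x) + (m + 1) * (y - z) / (y + z) - γ : ℝ) : ℂ) +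
      ((m + 1) * (y * z - 1) / (y + z) : ℝ) * I := by
  have he := sub_ne_zero.2 (H n (m + 1)).ab_ne
  have hE := h.gamma_mul_crossing_eq H hc
  have hC := hc.eq n (m + 1)
  rw [Nat.add_sub_cancel, h.vertical_term_west H] at hC
  apply mul_left_cancel₀ he
  push_cast at hC ⊢
  linear_combination hE - hC

lemma crossing_relation (h : StarCoords f n m x y z) (K : IsKiteNet f) (hc : ConstraintC γ f)
    (hcd : CDenomNonzero f) (hpar : Odd (n + m)) :
    x * y * (n + 1 + (m + 1) + 1 - γ) + y * (-(n + 1) + (m + 1) + 1 - γ) +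
      z * (-(n + 1) - (m + 1) + 1 - γ) + z * x * (n + 1 - (m + 1) + 1 - γ) = 0 := by
  have hyz := add_ne_zero_of_mul_pos h.yz_pos
  have hx : 1 + x ≠ 0 := (add_pos one_pos h.x_pos).ne'
  have hre := congrArg re (h.horizontal_term_eq K.isHarmonicNet hc)
  rw [K.re_horizontal_term hcd hpar, ← mk_eq_add_mul_I] at hre
  field_simp at hre
  linear_combination -hre

lemma horizontal_term_west {t : ℝ} (h : StarCoords f (n + 1) m x y z) (H : IsHarmonicNet f)
    (hSW : f n m - f (n + 1) m = I * t * (f (n + 1) (m + 1) - f (n + 1) m)) (hzt : z + t ≠ 0) :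
    (f (n + 1) (m + 1) - f n (m + 1)) / (f (n + 2) (m + 1) - f n (m + 1)) =
      (1 / 2 : ℝ) + ((1 - z * t) / (2 * (z + t)) : ℝ) * I := by
  have hztC : (z + t : ℂ) ≠ 0 := mod_cast hzt
  have hz := one_add_I_mul_ofReal_ne_zero z
  have ht := one_add_I_mul_ofReal_ne_zero t
  have he := sub_ne_zero.2 (H (n + 1) (m + 1)).ab_ne
  have hS := eq_div_of_mul_eq hz (h.south_of_west_mul H)
  have hW := eq_div_of_mul_eq ht (H.west_of_west_mul hSW)
  rw [hS] at hW
  set e := f (n + 1 + 1) (m + 1) - f (n + 1) (m + 1)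
  have hEW : f (n + 2) (m + 1) - f n (m + 1) =
      2 * I * (z + t) * e / ((1 + I * z) * (1 + I * t)) := by
    rw [← sub_sub_sub_cancel_right _ _ (f (n + 1) (m + 1)), hW]
    field_simp
    ring
  rw [hEW, ← neg_sub (f n (m + 1)), hW]
  push_cast
  field_simp
  linear_combination -I_sq

lemma exists_southwest (h : StarCoords f (n + 1) m x y z) (K : IsKiteNet f) (himm : IsImmersion f)
    (hpar : Even (n + m)) : ∃ t : ℝ, 0 < z * t ∧
      f n m - f (n + 1) m = I * t * (f (n + 1) (m + 1) - f (n + 1) m) := by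
  have hSW := K.isHarmonicNet n m
  have hSE := K.isHarmonicNet (n + 1) m
  have hN_perp_W := (hSW.corner_next (K.corner n m)).inner_eq_zero (by grind)
  have hN_perp_E := (K.corner (n + 1) m).symm.inner_eq_zero (by grind)
  obtain ⟨s, hs, hW⟩ := exists_pos_sub_eq_mul_of_disjoint_interior_convexHull
    (by simp [quadVerts, Set.insert_subset_iff]) (by simp [quadVerts, Set.insert_subset_iff])
    hSW.bc_ne hSE.ab_ne hSW.ab_ne.symm hN_perp_E hN_perp_W (himm n m).1.symm
  have hE := hSE.rotate.rotate.sub_eq_neg_mul (w := I * z) (by linear_combination h.south)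
  refine ⟨s * z, ?_, ?_⟩
  · rw [mul_left_comm]
    exact mul_pos hs (mul_self_pos.2 (right_ne_zero_of_mul h.yz_pos.ne'))
  · rw [hW, ← neg_sub, hE]
    push_cast
    ring

lemma center_relation {t : ℝ} (h : StarCoords f (n + 1) m x y z) (H : IsHarmonicNet f)
    (hc : ConstraintC γ f) (hzt : z + t ≠ 0)
    (hSW : f n m - f (n + 1) m = I * t * (f (n + 1) (m + 1) - f (n + 1) m)) :
    (n + 1) * (1 - z * t) * (y + z) + (m + 1) * (1 - y * z) * (z + t) = 0 := by
  have hyz := add_ne_zero_of_mul_pos h.yz_pos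
  have him := congrArg im (h.horizontal_term_eq H hc)
  rw [Nat.add_sub_cancel, h.horizontal_term_west H hSW hzt, ← mk_eq_add_mul_I, ← mk_eq_add_mul_I,
    im_ofReal_mul] at him
  field_simp at him
  push_cast at him
  linear_combination him

lemma norm_east (h : StarCoords f n m x y z) :
    ‖f (n + 2) (m + 1) - f (n + 1) (m + 1)‖ = x * ‖f (n + 1) (m + 1) - f n (m + 1)‖ := by
  rw [h.east, norm_mul, norm_real, Real.norm_of_nonneg h.x_pos.le]

lemma norm_north (h : StarCoords f n m x y z) :
    ‖f (n + 1) (m + 2) - f (n + 1) (m + 1)‖ = |y| * ‖f (n + 1) (m + 1) - f n (m + 1)‖ := by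
  simp [h.north]

lemma norm_south (h : StarCoords f n m x y z) :
    ‖f (n + 1) m - f (n + 1) (m + 1)‖ = |z| * ‖f (n + 1) (m + 1) - f n (m + 1)‖ := by
  simp [h.south]

end StarCoords

namespace IsKiteNet

variable {γ : ℝ} {f : ℕ → ℕ → ℂ} {n m : ℕ}

lemma radii_eq_of_odd (K : IsKiteNet f) (himm : IsImmersion f) (hc : ConstraintC γ f)
    (hcd : CDenomNonzero f) (hpar : Odd (n + m)) :
    ‖f (n + 2) (m + 1) - f (n + 1) (m + 1)‖ * ‖f (n + 1) (m + 2) - f (n + 1) (m + 1)‖ *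
        ((n + 1 : ℕ) + (m + 1 : ℕ) + 1 - γ) +
      ‖f (n + 1) (m + 2) - f (n + 1) (m + 1)‖ * ‖f n (m + 1) - f (n + 1) (m + 1)‖ *
        (-(n + 1 : ℕ) + (m + 1 : ℕ) + 1 - γ) +
      ‖f n (m + 1) - f (n + 1) (m + 1)‖ * ‖f (n + 1) m - f (n + 1) (m + 1)‖ *
        (-(n + 1 : ℕ) - (m + 1 : ℕ) + 1 - γ) +
      ‖f (n + 1) m - f (n + 1) (m + 1)‖ * ‖f (n + 2) (m + 1) - f (n + 1) (m + 1)‖ *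
        ((n + 1 : ℕ) - (m + 1 : ℕ) + 1 - γ) = 0 := by
  obtain ⟨x, y, z, h⟩ := K.exists_starCoords himm hpar
  rw [h.norm_east, h.norm_north, h.norm_south, norm_sub_rev (f n (m + 1))]
  set r := ‖f (n + 1) (m + 1) - f n (m + 1)‖
  push_cast
  rcases pos_and_pos_or_neg_and_neg_of_mul_pos h.yz_pos with ⟨hy, hz⟩ | ⟨hy, hz⟩
  · rw [abs_of_pos hy, abs_of_pos hz]
    linear_combination r ^ 2 * h.crossing_relation K hc hcd hpar
  · rw [abs_of_neg hy, abs_of_neg hz]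
    linear_combination -r ^ 2 * h.crossing_relation K hc hcd hpar

/-- Equation (Ri) with `R(z)`, `R(z + i)`, `R(z + 1)` and `R(z - i)` read off as edge lengths. -/
lemma radii_eq_of_even (K : IsKiteNet f) (himm : IsImmersion f) (hc : ConstraintC γ f)
    (hpar : Even (n + m)) :
    (n + 1) * (‖f (n + 2) (m + 1) - f (n + 1) (m + 1)‖ ^ 2 -
        ‖f (n + 3) m - f (n + 2) m‖ * ‖f (n + 1) m - f n m‖) *
        (‖f (n + 3) (m + 2) - f (n + 2) (m + 2)‖ + ‖f (n + 3) m - f (n + 2) m‖) +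
      (m + 1) * (‖f (n + 2) (m + 1) - f (n + 1) (m + 1)‖ ^ 2 -
        ‖f (n + 3) (m + 2) - f (n + 2) (m + 2)‖ * ‖f (n + 3) m - f (n + 2) m‖) *
        (‖f (n + 3) m - f (n + 2) m‖ + ‖f (n + 1) m - f n m‖) = 0 := by
  obtain ⟨x, y, z, h⟩ := K.exists_starCoords himm (show Odd (n + 1 + m) by grind)
  obtain ⟨t, hzt, hSW⟩ := h.exists_southwest K himm hpar
  have him := h.center_relation K.isHarmonicNet hc (add_ne_zero_of_mul_pos hzt) hSW
  set r := ‖f (n + 2) (m + 1) - f (n + 1) (m + 1)‖ with hr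
  have hNE : ‖f (n + 3) (m + 2) - f (n + 2) (m + 2)‖ = |y| * r := by
    rw [← K.norm_south_eq_east (by grind), norm_sub_rev, h.norm_north]
  have hSE : ‖f (n + 3) m - f (n + 2) m‖ = |z| * r := by
    rw [← K.norm_north_eq_east (by grind), norm_sub_rev, h.norm_south]
  have hSW' : ‖f (n + 1) m - f n m‖ = |t| * r := by
    rw [norm_sub_rev, hSW, norm_mul, norm_sub_rev _ (f (n + 1) m), K.norm_south_eq_east (by grind)]
    simp [hr]
  rw [hNE, hSE, hSW']
  rcases pos_and_pos_or_neg_and_neg_of_mul_pos h.yz_pos with ⟨hy, hz⟩ | ⟨hy, hz⟩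
  · rw [abs_of_pos hy, abs_of_pos hz, abs_of_pos ((pos_iff_pos_of_mul_pos hzt).1 hz)]
    linear_combination r ^ 3 * him
  · rw [abs_of_neg hy, abs_of_neg hz, abs_of_neg ((neg_iff_neg_of_mul_pos hzt).1 hz)]
    linear_combination -r ^ 3 * him

lemma riEq_radiusOf (K : IsKiteNet f) (himm : IsImmersion f) (hc : ConstraintC γ f) {N M : ℤ}
    (h : |N| < M) : RiEq (radiusOf f) N M := by
  obtain ⟨hNM, hMN⟩ := abs_lt.1 h
  obtain ⟨n, hn⟩ : ∃ n : ℕ, N + M = n + 1 := ⟨(N + M - 1).toNat, by omega⟩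
  obtain ⟨m, hm⟩ : ∃ m : ℕ, M - N = m + 1 := ⟨(M - N - 1).toNat, by omega⟩
  have hradius {A B : ℤ} {a b : ℕ} (ha : A + B = a) (hb : B - A = b) :
      radiusOf f A B = ‖f (a + 1) b - f a b‖ := by
    rw [radiusOf, ha, hb, Int.toNat_natCast, Int.toNat_natCast]
  rw [RiEq, hradius (A := N) (a := n + 1) (b := m + 1) (by grind) (by grind),
    hradius (A := N + 1) (a := n + 2) (b := m) (by grind) (by grind),
    hradius (B := M + 1) (a := n + 2) (b := m + 2) (by grind) (by grind),
    hradius (B := M - 1) (a := n) (b := m) (by grind) (by grind), hn, hm]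
  exact_mod_cast K.radii_eq_of_even himm hc (by grind)

end IsKiteNet

/-- For an immersed solution of (q) and (c): (a) the radii of the four circles meeting
at a vertex with `n + m` odd satisfy the equation (sq); (b) the radius function `R`
satisfies equation (Ri) at every `z ∈ V_int`. -/
theorem immersed_radii_equations (γ : ℝ) (hγ0 : 0 < γ) (hγ2 : γ < 2) (α : ℝ)
    (f : ℕ → ℕ → ℂ)
    (hq : CrossRatioEq f) (hqd : QDenomNonzero f)
    (hc : ConstraintC (γ : ℂ) f) (hcd : CDenomNonzero f)
    (h00 : f 0 0 = 0) (h10 : f 1 0 = 1)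
    (h01 : f 0 1 = Complex.exp (Complex.I * α))
    (himm : IsImmersion f) :
    (∀ n m : ℕ, 1 ≤ n → 1 ≤ m → (n + m) % 2 = 1 →
      ‖f (n+1) m - f n m‖ * ‖f n (m+1) - f n m‖ *
          ((n : ℝ) + m + 1 - γ) +
        ‖f n (m+1) - f n m‖ * ‖f (n-1) m - f n m‖ *
          (-(n : ℝ) + m + 1 - γ) +
        ‖f (n-1) m - f n m‖ * ‖f n (m-1) - f n m‖ *
          (-(n : ℝ) - m + 1 - γ) +
        ‖f n (m-1) - f n m‖ * ‖f (n+1) m - f n m‖ *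
          ((n : ℝ) - m + 1 - γ) = 0) ∧
    (∀ N M : ℤ, |N| < M → RiEq (radiusOf f) N M) := by
  have h0 : ‖f 1 0 - f 0 0‖ = ‖f 0 1 - f 0 0‖ := by
    rw [h00, h10, h01, mul_comm, sub_zero, sub_zero, norm_exp_ofReal_mul_I, norm_one]
  have K := IsKiteNet.of_constraintC hq hqd hc hcd h0
  refine ⟨fun n m hn hm hnm ↦ ?_, fun N M hNM ↦ K.riEq_radiusOf himm hc hNM⟩
  obtain ⟨n, rfl⟩ := Nat.exists_eq_add_of_le' hn
  obtain ⟨m, rfl⟩ := Nat.exists_eq_add_of_le' hm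
  exact K.radii_eq_of_odd himm hc hcd (by grind)

end
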